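/- Let S be a right coherent monoid and let T be a finite monoid. Then the direct product S × T is right coherent. -/

import Mathlib

def IsRightCongruence {M : Type*} [Monoid M] (r : M → M → Prop) : Prop :=
  Equivalence r ∧ ∀ a b c : M, r a b → r (a * c) (b * c)

def RCongGenBy {M : Type*} [Monoid M] (H : Set (M × M)) (r : M → M → Prop) : Prop :=
  IsRightCongruence r ∧ (∀ p ∈ H, r p.1 p.2) ∧
    ∀ r' : M → M → Prop, IsRightCongruence r' → (∀ p ∈ H, r' p.1 p.2) →
      ∀ x y : M, r x y → r' x y

def FGRightCongruence {M : Type*} [Monoid M] (r : M → M → Prop) : Prop :=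
  ∃ H : Set (M × M), H.Finite ∧ RCongGenBy H r

def RightCoherent (M : Type*) [Monoid M] : Prop :=
  ∀ r : M → M → Prop, FGRightCongruence r → ∀ a b : M,
    (∃ C : Finset M,
      {x : M | (∃ s : M, r x (a * s)) ∧ (∃ t : M, r x (b * t))} =
        ⋃ c ∈ C, {x : M | ∃ s : M, r x (c * s)}) ∧
    FGRightCongruence (fun u v : M => r (a * u) (a * v))

/-! A monoid `S` is right coherent exactly when every finitely generated subact of a finitely
presented right `S`-act is finitely presented. In this form coherence passes from two acts to their
coproduct: when a finitely generated congruence on `X ⊕ Y` is restricted to `X`, the generator pairs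
joining `X` to `Y` exhibit the effect of `Y` as an amalgam, and the identifications it forces on `X`
are the image of the kernel of a map from a finitely generated free act to a quotient of `Y`. Hence
coherence passes to every monoid `N` that is finitely presented as a right `S`-act through a
homomorphism `S → N`, which amounts to a right `S`-action commuting with the left multiplications of
`N`: a finitely generated right congruence on `N` is also finitely generated over `S`, and
annihilators and intersections of cyclic subacts over `N` can be computed over `S`. The right
`S`-act `S × T` is free of rank `|T|`. -/

section Congruences

variable {M X Y Z : Type*} [Monoid M] [MulAction M X] [MulAction M Y] [MulAction M Z]

variable (M) in
/-- The congruence on the act `X` generated by a set of pairs: the equivalence relation generated by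
the translates of these pairs. -/
def smulConGen (H : Set (X × X)) : SMulCon M X where
  toSetoid := Relation.EqvGen.setoid fun x y => ∃ p ∈ H, ∃ m : M, m • p.1 = x ∧ m • p.2 = y
  smul k x y h := by
    induction h with
    | rel _ _ h =>
      obtain ⟨p, hp, m, rfl, rfl⟩ := h
      exact .rel _ _ ⟨p, hp, k * m, mul_smul .., mul_smul ..⟩
    | refl => exact .refl _
    | symm _ _ _ ih => exact .symm _ _ ih
    | trans _ _ _ _ _ ih₁ ih₂ => exact .trans _ _ _ ih₁ ih₂

theorem smulConGen_of_mem {H : Set (X × X)} {x y : X} (h : (x, y) ∈ H) :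
    (smulConGen M H).r x y :=
  .rel _ _ ⟨(x, y), h, 1, one_smul .., one_smul ..⟩

theorem iff_of_smulConGen {H : Set (X × X)} {P : X → Prop}
    (hP : ∀ p ∈ H, ∀ m : M, P (m • p.1) ↔ P (m • p.2)) {x y : X} (h : (smulConGen M H).r x y) :
    P x ↔ P y := by
  induction h with
  | rel _ _ h =>
    obtain ⟨p, hp, m, rfl, rfl⟩ := h
    exact hP p hp m
  | refl => exact Iff.rfl
  | symm _ _ _ ih => exact ih.symm
  | trans _ _ _ _ _ ih₁ ih₂ => exact ih₁.trans ih₂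

theorem smulCon_right_iff {c : SMulCon M X} {y z : X} (h : c.r y z) (x : X) :
    c.r x y ↔ c.r x z :=
  ⟨fun hxy => c.trans' hxy h, fun hxz => c.trans' hxz (c.symm' h)⟩

theorem smulConGen_le {H : Set (X × X)} {c : SMulCon M X} (hc : ∀ p ∈ H, c.r p.1 p.2) {x y : X}
    (h : (smulConGen M H).r x y) : c.r x y :=
  (iff_of_smulConGen (fun p hp m => smulCon_right_iff (c.smul m (hc p hp)) x) h).1 (c.refl' x)

/-- The pullback of a congruence along an act homomorphism `f`, that is, the kernel of `f` followed
by the quotient map. -/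
def smulConComap (f : X →[M] Y) (c : SMulCon M Y) : SMulCon M X where
  toSetoid := c.toSetoid.comap f
  smul m x y h := by
    simpa only [Setoid.comap_rel, map_smul] using c.smul m h

/-- Finite generation of a congruence on an act. -/
def FGSMulCon (c : SMulCon M X) : Prop :=
  ∃ H : Set (X × X), H.Finite ∧ ∀ x y, c.r x y ↔ (smulConGen M H).r x y

theorem FGSMulCon.of_finite {H : Set (X × X)} (hH : H.Finite) {c : SMulCon M X}
    (hHc : ∀ p ∈ H, c.r p.1 p.2) (hcH : ∀ x y, c.r x y → (smulConGen M H).r x y) : FGSMulCon c :=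
  ⟨H, hH, fun x y => ⟨hcH x y, smulConGen_le hHc⟩⟩

theorem FGSMulCon.of_comap {f : X →[M] Y} (hf : Function.Surjective f) {c : SMulCon M Y}
    (h : FGSMulCon (smulConComap f c)) : FGSMulCon c := by
  obtain ⟨K, hK, hcK⟩ := h
  refine .of_finite (hK.image (Prod.map f f)) ?_ (hf.forall₂.2 fun x y hxy => ?_)
  · rintro _ ⟨p, hp, rfl⟩
    exact (hcK _ _).2 (smulConGen_of_mem hp)
  · let d : SMulCon M Y := smulConGen M (Prod.map f f '' K)
    have hKd : ∀ p ∈ K, d.r (f p.1) (f p.2) := fun p hp => smulConGen_of_mem ⟨p, hp, rfl⟩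
    exact smulConGen_le (c := smulConComap f d) hKd ((hcK x y).1 hxy)

theorem FGSMulCon.comap {c : SMulCon M Y} (hc : FGSMulCon c) {f : X →[M] Y}
    (hf : Function.Surjective f) (hker : FGSMulCon (SMulCon.ker f)) :
    FGSMulCon (smulConComap f c) := by
  obtain ⟨K, hK, hfK⟩ := hker
  obtain ⟨H, hH, hcH⟩ := hc
  obtain ⟨g, hg⟩ := hf.hasRightInverse
  let d : SMulCon M X := smulConGen M (K ∪ Prod.map g g '' H)
  have ker_le {x y : X} (h : f x = f y) : d.r x y :=
    smulConGen_le (fun p hp => smulConGen_of_mem (.inl hp)) ((hfK x y).1 h)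
  -- The section `g` is equivariant modulo the kernel of `f`, so `d` pulls back along it.
  let e : SMulCon M Y :=
    { toSetoid := d.toSetoid.comap g
      smul := fun m y z h => by
        have hgm (w : Y) : d.r (g (m • w)) (m • g w) := ker_le (by rw [map_smul, hg, hg])
        exact d.trans' (hgm y) (d.trans' (d.smul m h) (d.symm' (hgm z))) }
  refine .of_finite (hK.union (hH.image (Prod.map g g))) ?_ fun x y hxy => ?_
  · rintro _ (hp | ⟨p, hp, rfl⟩)
    · have hfp : f _ = f _ := (hfK _ _).2 (smulConGen_of_mem hp)
      change c.r (f _) (f _)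
      rw [hfp]
    · change c.r (f (g p.1)) (f (g p.2))
      rw [hg, hg]
      exact (hcH _ _).2 (smulConGen_of_mem hp)
  · have hgf (z : X) : d.r z (g (f z)) := ker_le (hg _).symm
    have hHd : ∀ p ∈ H, d.r (g p.1) (g p.2) := fun p hp =>
      smulConGen_of_mem (Set.mem_union_right _ ⟨p, hp, rfl⟩)
    have hgxy : d.r (g (f x)) (g (f y)) := smulConGen_le (c := e) hHd ((hcH _ _).1 hxy)
    exact d.trans' (hgf x) (d.trans' hgxy (d.symm' (hgf y)))

theorem FGSMulCon.ker_of_injective {f : X →[M] Y} (hf : Function.Injective f) :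
    FGSMulCon (SMulCon.ker f) :=
  .of_finite Set.finite_empty (by simp) fun x y hxy => hf hxy ▸ Setoid.refl' _ x

end Congruences

section Coproducts

variable {M X Y Z ι : Type*} [Monoid M] [MulAction M X] [MulAction M Y] [MulAction M Z]

variable (M X Y) in
/-- The inclusion of the left summand in a coproduct of acts. -/
def sumInlHom : X →[M] X ⊕ Y where
  toFun := Sum.inl
  map_smul' _ _ := rfl

variable (M X Y) in
/-- The inclusion of the right summand in a coproduct of acts. -/
def sumInrHom : Y →[M] X ⊕ Y where
  toFun := Sum.inr
  map_smul' _ _ := rfl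

/-- The homomorphism out of a binary coproduct of acts. -/
def sumHom (f : X →[M] Z) (g : Y →[M] Z) : X ⊕ Y →[M] Z where
  toFun := Sum.elim f g
  map_smul' m := by
    rintro (x | y)
    · exact map_smul f m x
    · exact map_smul g m y

/-- The homomorphism out of a coproduct of a family of acts. -/
def sigmaHom {W : ι → Type*} [∀ i, MulAction M (W i)] (f : ∀ i, W i →[M] Z) :
    (Σ i, W i) →[M] Z where
  toFun x := f x.1 x.2
  map_smul' m x := map_smul (f x.1) m x.2

/-- The images of `f` and `g` in the quotient by `c` intersect in a finitely generated subact. The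
generators are recorded as pairs of preimages. -/
def FGMeet (c : SMulCon M Z) (f : X →[M] Z) (g : Y →[M] Z) : Prop :=
  ∃ P : Set (X × Y), P.Finite ∧ (∀ p ∈ P, c.r (f p.1) (g p.2)) ∧
    ∀ x y, c.r (f x) (g y) → ∃ p ∈ P, ∃ m : M, c.r (f x) (f (m • p.1))

theorem FGSMulCon.comap_sigmaHom [Finite ι] {W : ι → Type*} [∀ i, MulAction M (W i)]
    {f : ∀ i, W i →[M] Z} {c : SMulCon M Z} (hker : ∀ i, FGSMulCon (smulConComap (f i) c))
    (hmeet : ∀ i j, FGMeet c (f i) (f j)) : FGSMulCon (smulConComap (sigmaHom f) c) := by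
  choose A hA hcA using hker
  choose P hP hcP hmP using hmeet
  let H : Set ((Σ i, W i) × Σ i, W i) :=
    (⋃ i, Prod.map (Sigma.mk i) (Sigma.mk i) '' A i) ∪
      ⋃ i, ⋃ j, Prod.map (Sigma.mk i) (Sigma.mk j) '' P i j
  have hH : H.Finite := (Set.finite_iUnion fun i => (hA i).image _).union
    (Set.finite_iUnion fun i => Set.finite_iUnion fun j => (hP i j).image _)
  let d : SMulCon M (Σ i, W i) := smulConGen M H
  let inj (i : ι) : W i →[M] Σ i, W i := { toFun := Sigma.mk i, map_smul' := fun _ _ => rfl }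
  have hAd (i : ι) : ∀ p ∈ A i, d.r ⟨i, p.1⟩ ⟨i, p.2⟩ := fun p hp =>
    smulConGen_of_mem (Set.mem_union_left _ (Set.mem_iUnion.2 ⟨i, p, hp, rfl⟩))
  have hPd (i j : ι) : ∀ p ∈ P i j, d.r ⟨i, p.1⟩ ⟨j, p.2⟩ := fun p hp =>
    smulConGen_of_mem (Set.mem_union_right _ (Set.mem_iUnion₂.2 ⟨i, j, p, hp, rfl⟩))
  have same {i : ι} {x y : W i} (h : c.r (f i x) (f i y)) : d.r ⟨i, x⟩ ⟨i, y⟩ :=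
    smulConGen_le (c := smulConComap (inj i) d) (hAd i) ((hcA i x y).1 h)
  refine .of_finite hH ?_ ?_
  · rintro _ (h | h)
    · obtain ⟨i, p, hp, rfl⟩ := Set.mem_iUnion.1 h
      exact (hcA i _ _).2 (smulConGen_of_mem hp)
    · obtain ⟨i, j, p, hp, rfl⟩ := Set.mem_iUnion₂.1 h
      exact hcP i j p hp
  · rintro ⟨i, x⟩ ⟨j, y⟩ (hxy : c.r (f i x) (f j y))
    obtain ⟨p, hp, m, hm⟩ := hmP i j x y hxy
    have hp_smul : c.r (f i (m • p.1)) (f j (m • p.2)) := by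
      simpa only [map_smul] using c.smul m (hcP i j p hp)
    have hpy : c.r (f j (m • p.2)) (f j y) :=
      c.trans' (c.symm' hp_smul) (c.trans' (c.symm' hm) hxy)
    exact d.trans' (same hm) (d.trans' (d.smul m (hPd i j p hp)) (same hpy))

/-- The pairs of `H` that join `X` to `Y`, in either order. -/
def crossPairs (H : Set ((X ⊕ Y) × (X ⊕ Y))) : Set (X × Y) :=
  {p | (.inl p.1, .inr p.2) ∈ H ∨ (.inr p.2, .inl p.1) ∈ H}

theorem crossPairs_finite {H : Set ((X ⊕ Y) × (X ⊕ Y))} (hH : H.Finite) :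
    (crossPairs H).Finite :=
  (hH.preimage (f := fun p : X × Y => ((.inl p.1, .inr p.2) : (X ⊕ Y) × (X ⊕ Y)))
    (Sum.inl_injective.prodMap Sum.inr_injective).injOn).union
    (hH.preimage (f := fun p : X × Y => ((.inr p.2, .inl p.1) : (X ⊕ Y) × (X ⊕ Y)))
      ((Sum.inr_injective.prodMap Sum.inl_injective).comp Prod.swap_injective).injOn)

theorem smulConGen_of_mem_crossPairs {H : Set ((X ⊕ Y) × (X ⊕ Y))} {p : X × Y}
    (hp : p ∈ crossPairs H) : (smulConGen M H).r (.inl p.1) (.inr p.2) :=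
  hp.elim smulConGen_of_mem fun h => Setoid.symm' _ (smulConGen_of_mem h)

theorem FGMeet.of_fg_comap_sumHom {f : X →[M] Z} {g : Y →[M] Z} {c : SMulCon M Z}
    (h : FGSMulCon (smulConComap (sumHom f g) c)) : FGMeet c f g := by
  obtain ⟨H, hH, hcH⟩ := h
  refine ⟨crossPairs H, crossPairs_finite hH,
    fun p hp => (hcH (.inl p.1) (.inr p.2)).2 (smulConGen_of_mem_crossPairs hp),
    fun x y hxy => ?_⟩
  -- A chain of generators from `X` to `Y` crosses over by one of the `crossPairs`.
  let Meets (w : X ⊕ Y) : Prop := ∃ p ∈ crossPairs H, ∃ m : M, c.r (sumHom f g w) (f (m • p.1))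
  have meets_iff {v w : X ⊕ Y} (h : c.r (sumHom f g v) (sumHom f g w)) : Meets v ↔ Meets w :=
    exists_congr fun p => and_congr_right' <| exists_congr fun m =>
      ⟨fun hv => c.trans' (c.symm' h) hv, c.trans' h⟩
  have hstep : ∀ p ∈ H, ∀ m : M,
      (Meets (m • p.1) ∨ (m • p.1).isLeft) ↔ (Meets (m • p.2) ∨ (m • p.2).isLeft) := by
    intro p hp m
    have hpm : Meets (m • p.1) ↔ Meets (m • p.2) :=
      meets_iff ((smulConComap (sumHom f g) c).smul m ((hcH _ _).2 (smulConGen_of_mem hp)))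
    obtain ⟨x₁ | y₁, x₂ | y₂⟩ := p
    · simp
    · have : Meets (m • Sum.inl x₁) := ⟨(x₁, y₂), .inl hp, m, c.refl' _⟩
      exact ⟨fun _ => .inl (hpm.1 this), fun _ => .inl this⟩
    · have : Meets (m • Sum.inl x₂) := ⟨(x₂, y₁), .inr hp, m, c.refl' _⟩
      exact ⟨fun _ => .inl this, fun _ => .inl (hpm.2 this)⟩
    · simpa using hpm
  have hy : Meets (.inr y) := by
    simpa using (iff_of_smulConGen (P := fun w => Meets w ∨ w.isLeft) hstep
      ((hcH (.inl x) (.inr y)).1 hxy)).1 (.inr rfl)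
  exact (meets_iff (v := .inl x) hxy).2 hy

/-- The pairs generating the amalgam of `X / a` and `Y / b` over `F`. -/
inductive AmalgamRel {F : Type*} (a : SMulCon M X) (b : SMulCon M Y) (p : F → X) (q : F → Y) :
    X ⊕ Y → X ⊕ Y → Prop
  | left {x x' : X} : a.r x x' → AmalgamRel a b p q (.inl x) (.inl x')
  | right {y y' : Y} : b.r y y' → AmalgamRel a b p q (.inr y) (.inr y')
  | glue (u : F) : AmalgamRel a b p q (.inl (p u)) (.inr (q u))

theorem amalgamRel_of_mem {F : Type*} {a : SMulCon M X} {b : SMulCon M Y} {p : F → X} {q : F → Y}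
    {H : Set ((X ⊕ Y) × (X ⊕ Y))} (ha : ∀ x x', (.inl x, .inl x') ∈ H → a.r x x')
    (hb : ∀ y y', (.inr y, .inr y') ∈ H → b.r y y')
    (hpq : ∀ l ∈ crossPairs H, ∃ u, p u = l.1 ∧ q u = l.2) :
    ∀ e ∈ H, AmalgamRel a b p q e.1 e.2 ∨ AmalgamRel a b p q e.2 e.1 := by
  have glue : ∀ l ∈ crossPairs H, AmalgamRel a b p q (.inl l.1) (.inr l.2) := by
    intro l hl
    obtain ⟨u, hp, hq⟩ := hpq l hl
    exact hp ▸ hq ▸ .glue u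
  rintro ⟨x | y, x' | y'⟩ he
  · exact .inl (.left (ha x x' he))
  · exact .inl (glue (x, y') (.inl he))
  · exact .inr (glue (x', y) (.inr he))
  · exact .inl (.right (hb y y' he))

theorem smulConGen_inl_of_amalgamRel {F : Type*} [MulAction M F] {a : SMulCon M X}
    {b : SMulCon M Y} {p : F →[M] X} {q : F →[M] Y} (hqp : ∀ u v, b.r (q u) (q v) → a.r (p u) (p v))
    {H : Set ((X ⊕ Y) × (X ⊕ Y))}
    (hH : ∀ e ∈ H, AmalgamRel a b p q e.1 e.2 ∨ AmalgamRel a b p q e.2 e.1) {x x' : X}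
    (h : (smulConGen M H).r (.inl x) (.inl x')) : a.r x x' := by
  -- The class of `x` in the amalgam.
  let P : X ⊕ Y → Prop := Sum.elim (a.r x) fun y => ∃ u, a.r x (p u) ∧ b.r (q u) y
  have hP {v w : X ⊕ Y} (hvw : AmalgamRel a b p q v w) (m : M) : P (m • v) ↔ P (m • w) := by
    cases hvw with
    | left h => exact smulCon_right_iff (a.smul m h) x
    | right h => exact exists_congr fun u => and_congr_right' (smulCon_right_iff (b.smul m h) _)
    | glue u =>
      change a.r x (m • p u) ↔ ∃ v, a.r x (p v) ∧ b.r (q v) (m • q u)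
      rw [← map_smul, ← map_smul]
      exact ⟨fun hx => ⟨m • u, hx, b.refl' _⟩, fun ⟨v, hx, hv⟩ => a.trans' hx (hqp v _ hv)⟩
  have hstep : ∀ e ∈ H, ∀ m : M, P (m • e.1) ↔ P (m • e.2) := fun e he m =>
    (hH e he).elim (hP · m) fun h => (hP h m).symm
  exact (iff_of_smulConGen hstep h).1 (a.refl' x)

end Coproducts

section CoherentActs

open scoped RightActions

variable {S X Y Z ι : Type*} [Monoid S] [MulAction Sᵐᵒᵖ X] [MulAction Sᵐᵒᵖ Y] [MulAction Sᵐᵒᵖ Z]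

/-- The homomorphism `s ↦ y s` from `S` to a right `S`-act. -/
def orbitHom (y : Y) : S →[Sᵐᵒᵖ] Y where
  toFun s := y <• s
  map_smul' c s := mul_smul c (.op s) y

variable (S) in
/-- The homomorphism from the free right `S`-act on `ι`, realised as a coproduct of copies of `S`,
that sends the `i`-th generator to `y i`. -/
def freeLift (y : ι → Y) : (Σ _ : ι, S) →[Sᵐᵒᵖ] Y :=
  sigmaHom fun i => orbitHom (y i)

theorem map_freeLift (f : Y →[Sᵐᵒᵖ] Z) (y : ι → Y) (u : Σ _ : ι, S) :
    f (freeLift S y u) = freeLift S (f ∘ y) u :=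
  map_smul f _ _

variable (S Y) in
/-- Finite generation of a right `S`-act. -/
def FGAct : Prop :=
  ∃ (n : ℕ) (y : Fin n → Y), Function.Surjective (freeLift S y)

variable (S Y) in
/-- Finite presentability of a right `S`-act: it is the quotient of a finitely generated free act by
a finitely generated congruence. -/
def FPAct : Prop :=
  ∃ (n : ℕ) (y : Fin n → Y), Function.Surjective (freeLift S y) ∧
    FGSMulCon (SMulCon.ker (freeLift S y))

variable (S Y) in
/-- Coherence of a right `S`-act `Y`: every finitely generated subact of a quotient of `Y` by a
finitely generated congruence is finitely presented. The subact generated by the classes of the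
`y i` is encoded by the kernel of its presentation. -/
def CoherentAct : Prop :=
  ∀ c : SMulCon Sᵐᵒᵖ Y, FGSMulCon c → ∀ (n : ℕ) (y : Fin n → Y),
    FGSMulCon (smulConComap (freeLift S y) c)

theorem exists_freeLift_eq_comp_equiv [Finite ι] (y : ι → Y) :
    ∃ (n : ℕ) (e : (Σ _ : Fin n, S) ≃ Σ _ : ι, S) (z : Fin n → Y),
      ⇑(freeLift S z) = freeLift S y ∘ e := by
  obtain ⟨n, ⟨e⟩⟩ := Finite.exists_equiv_fin ι
  exact ⟨n, e.symm.sigmaCongrLeft (β := fun _ => S), y ∘ e.symm, rfl⟩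

theorem FGAct.of_freeLift [Finite ι] (y : ι → Y) (hy : Function.Surjective (freeLift S y)) :
    FGAct S Y := by
  obtain ⟨n, e, z, hz⟩ := exists_freeLift_eq_comp_equiv (S := S) y
  exact ⟨n, z, hz ▸ hy.comp e.surjective⟩

theorem FPAct.of_freeLift_bijective [Finite ι] (y : ι → Y)
    (hy : Function.Bijective (freeLift S y)) : FPAct S Y := by
  obtain ⟨n, e, z, hz⟩ := exists_freeLift_eq_comp_equiv (S := S) y
  have hz' : Function.Bijective (freeLift S z) := hz ▸ hy.comp e.bijective
  exact ⟨n, z, hz'.surjective, .ker_of_injective hz'.injective⟩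

theorem FPAct.fgAct (hY : FPAct S Y) : FGAct S Y :=
  let ⟨n, y, hy, _⟩ := hY
  ⟨n, y, hy⟩

variable (S ι) in
theorem FGAct.free [Finite ι] : FGAct S (Σ _ : ι, S) :=
  .of_freeLift (fun i => ⟨i, 1⟩) fun ⟨i, s⟩ => ⟨⟨i, s⟩, congrArg (Sigma.mk i) (one_mul s)⟩

variable (S) in
theorem FGAct.self : FGAct S S :=
  .of_freeLift (fun _ : Unit => 1) fun s => ⟨⟨(), s⟩, one_mul s⟩

theorem FGAct.sum (hX : FGAct S X) (hY : FGAct S Y) : FGAct S (X ⊕ Y) := by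
  obtain ⟨m, x, hx⟩ := hX
  obtain ⟨n, y, hy⟩ := hY
  refine .of_freeLift (Sum.map x y) ?_
  rintro (w | w)
  · obtain ⟨⟨i, s⟩, rfl⟩ := hx w
    exact ⟨⟨.inl i, s⟩, rfl⟩
  · obtain ⟨⟨i, s⟩, rfl⟩ := hy w
    exact ⟨⟨.inr i, s⟩, rfl⟩

theorem CoherentAct.fg_comap (hY : CoherentAct S Y) (hZ : FGAct S Z) {c : SMulCon Sᵐᵒᵖ Y}
    (hc : FGSMulCon c) (f : Z →[Sᵐᵒᵖ] Y) : FGSMulCon (smulConComap f c) := by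
  obtain ⟨n, z, hz⟩ := hZ
  obtain ⟨H, hH, hcH⟩ := hY c hc n (f ∘ z)
  refine .of_comap hz ⟨H, hH, fun u v => ?_⟩
  rw [← hcH]
  change c.r (f _) (f _) ↔ c.r _ _
  rw [map_freeLift, map_freeLift]

theorem CoherentAct.of_surjective (hX : CoherentAct S X) {f : X →[Sᵐᵒᵖ] Y}
    (hf : Function.Surjective f) (hker : FGSMulCon (SMulCon.ker f)) : CoherentAct S Y := by
  intro c hc n y
  obtain ⟨g, hg⟩ := hf.hasRightInverse
  have hgy : f ∘ g ∘ y = y := funext fun i => hg (y i)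
  obtain ⟨H, hH, hcH⟩ := hX _ (hc.comap hf hker) n (g ∘ y)
  refine ⟨H, hH, fun u v => ?_⟩
  rw [← hcH]
  change c.r (freeLift S y u) (freeLift S y v) ↔
    c.r (f (freeLift S (g ∘ y) u)) (f (freeLift S (g ∘ y) v))
  rw [map_freeLift, map_freeLift, hgy]

theorem CoherentAct.fg_comap_inl (hY : CoherentAct S Y) {c : SMulCon Sᵐᵒᵖ (X ⊕ Y)}
    (hc : FGSMulCon c) : FGSMulCon (smulConComap (sumInlHom Sᵐᵒᵖ X Y) c) := by
  obtain ⟨H, hH, hcH⟩ := hc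
  have hHc {v w : X ⊕ Y} (h : (v, w) ∈ H) : c.r v w := (hcH v w).2 (smulConGen_of_mem h)
  have : Finite (crossPairs H) := crossPairs_finite hH
  let F := Σ _ : crossPairs H, S
  let p : F →[Sᵐᵒᵖ] X := freeLift S fun l => l.1.1
  let q : F →[Sᵐᵒᵖ] Y := freeLift S fun l => l.1.2
  have hpq (u : F) : c.r (.inl (p u)) (.inr (q u)) :=
    c.smul (.op u.2) ((hcH _ _).2 (smulConGen_of_mem_crossPairs u.1.2))
  let HX : Set (X × X) := Prod.map Sum.inl Sum.inl ⁻¹' H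
  let HY : Set (Y × Y) := Prod.map Sum.inr Sum.inr ⁻¹' H
  have hHX : HX.Finite := hH.preimage (Sum.inl_injective.prodMap Sum.inl_injective).injOn
  have hHY : HY.Finite := hH.preimage (Sum.inr_injective.prodMap Sum.inr_injective).injOn
  let b : SMulCon Sᵐᵒᵖ Y := smulConGen Sᵐᵒᵖ HY
  have hbc {y y' : Y} (h : b.r y y') : c.r (.inr y) (.inr y') :=
    smulConGen_le (c := smulConComap (sumInrHom Sᵐᵒᵖ X Y) c) (fun e he => hHc he) h
  obtain ⟨K, hK, hqK⟩ := hY.fg_comap (.free S (crossPairs H)) ⟨HY, hHY, fun _ _ => Iff.rfl⟩ q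
  let a : SMulCon Sᵐᵒᵖ X := smulConGen Sᵐᵒᵖ (HX ∪ Prod.map p p '' K)
  have hqp (u v : F) (h : b.r (q u) (q v)) : a.r (p u) (p v) :=
    smulConGen_le (c := smulConComap p a)
      (fun e he => smulConGen_of_mem (.inr ⟨e, he, rfl⟩)) ((hqK u v).1 h)
  have hamalgam : ∀ e ∈ H, AmalgamRel a b p q e.1 e.2 ∨ AmalgamRel a b p q e.2 e.1 :=
    amalgamRel_of_mem (fun x x' he => smulConGen_of_mem (.inl he))
      (fun y y' he => smulConGen_of_mem he)
      fun l hl => ⟨⟨⟨l, hl⟩, 1⟩, one_smul Sᵐᵒᵖ l.1, one_smul Sᵐᵒᵖ l.2⟩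
  refine .of_finite (hHX.union (hK.image _)) ?_ fun x x' hxx' =>
    smulConGen_inl_of_amalgamRel hqp hamalgam ((hcH _ _).1 hxx')
  rintro _ (he | ⟨e, he, rfl⟩)
  · exact hHc he
  · exact c.trans' (hpq e.1) (c.trans' (hbc ((hqK _ _).2 (smulConGen_of_mem he)))
      (c.symm' (hpq e.2)))

theorem fg_ker_sumHom_id (hZ : FGAct S Z) (f : Z →[Sᵐᵒᵖ] Y) :
    FGSMulCon (SMulCon.ker (sumHom f (.id Sᵐᵒᵖ))) := by
  obtain ⟨n, z, hz⟩ := hZ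
  let H : Set ((Z ⊕ Y) × (Z ⊕ Y)) := Set.range fun i => (.inl (z i), .inr (f (z i)))
  let d : SMulCon Sᵐᵒᵖ (Z ⊕ Y) := smulConGen Sᵐᵒᵖ H
  have hd (w : Z ⊕ Y) : d.r w (.inr (sumHom f (.id Sᵐᵒᵖ) w)) := by
    rcases w with w | y
    · obtain ⟨⟨i, s⟩, rfl⟩ := hz w
      have hi : d.r (.inl (z i)) (.inr (f (z i))) := smulConGen_of_mem ⟨i, rfl⟩
      have his := d.smul (.op s) hi
      rwa [Sum.smul_inl, Sum.smul_inr, ← map_smul] at his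
    · exact d.refl' _
  refine .of_finite (H := H) (Set.finite_range _) (by rintro _ ⟨i, rfl⟩; rfl) fun v w hvw => ?_
  replace hvw : sumHom f (.id Sᵐᵒᵖ) v = sumHom f (.id Sᵐᵒᵖ) w := hvw
  exact d.trans' (hd v) (hvw ▸ d.symm' (hd w))

theorem CoherentAct.sum (hX : CoherentAct S X) (hY : CoherentAct S Y) : CoherentAct S (X ⊕ Y) := by
  intro c hc n z
  let f : (Σ _ : Fin n, S) →[Sᵐᵒᵖ] X ⊕ Y := freeLift S z
  let assoc : ((Σ _ : Fin n, S) ⊕ X) ⊕ Y →[Sᵐᵒᵖ] (Σ _ : Fin n, S) ⊕ (X ⊕ Y) :=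
    { toFun := Equiv.sumAssoc _ _ _
      map_smul' := by rintro m ((u | x) | y) <;> rfl }
  have h : FGSMulCon (smulConComap (sumHom f (.id Sᵐᵒᵖ)) c) :=
    hc.comap (fun w => ⟨.inr w, rfl⟩) (fg_ker_sumHom_id (.free S (Fin n)) f)
  have h_assoc : FGSMulCon (smulConComap assoc (smulConComap (sumHom f (.id Sᵐᵒᵖ)) c)) :=
    h.comap (Equiv.sumAssoc _ _ _).surjective
      (.ker_of_injective (f := assoc) (Equiv.sumAssoc _ _ _).injective)
  exact hX.fg_comap_inl (hY.fg_comap_inl h_assoc)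

theorem CoherentAct.sigma {n : ℕ} {W : Fin n → Type*} [∀ i, MulAction Sᵐᵒᵖ (W i)]
    (hW : ∀ i, CoherentAct S (W i)) : CoherentAct S (Σ i, W i) := by
  induction n with
  | zero =>
    intro c _ m w
    exact .of_finite Set.finite_empty (by simp) fun u => (freeLift S w u).1.elim0
  | succ n ih =>
    let f : W 0 ⊕ (Σ i : Fin n, W i.succ) →[Sᵐᵒᵖ] Σ i, W i :=
      { toFun := Sum.elim (Sigma.mk 0) fun w => ⟨w.1.succ, w.2⟩
        map_smul' := by rintro m (w | w) <;> rfl }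
    have f_surjective : Function.Surjective f := by
      rintro ⟨i, w⟩
      cases i using Fin.cases with
      | zero => exact ⟨.inl w, rfl⟩
      | succ i => exact ⟨.inr ⟨i, w⟩, rfl⟩
    have f_injective : Function.Injective f := by
      rintro (v | ⟨i, v⟩) (w | ⟨j, w⟩) h
      · exact congrArg Sum.inl (sigma_mk_injective h)
      · exact absurd (congrArg Sigma.fst h) (Fin.succ_ne_zero j).symm
      · exact absurd (congrArg Sigma.fst h) (Fin.succ_ne_zero i)
      · obtain rfl : i = j := Fin.succ_injective n (congrArg Sigma.fst h)
        obtain rfl : v = w := sigma_mk_injective h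
        rfl
    exact ((hW 0).sum (ih fun i => hW i.succ)).of_surjective f_surjective
      (.ker_of_injective f_injective)

theorem FPAct.coherentAct (hY : FPAct S Y) (hS : CoherentAct S S) : CoherentAct S Y :=
  let ⟨_, _, hy, hker⟩ := hY
  (CoherentAct.sigma fun _ => hS).of_surjective hy hker

end CoherentActs

section Monoids

open scoped RightActions

variable {S N : Type*} [Monoid S] [Monoid N] [MulAction Sᵐᵒᵖ N] [SMulCommClass Sᵐᵒᵖ N N]

variable (S) in
/-- A right congruence on `N` regarded as a congruence of right `S`-acts. -/
def IsRightCongruence.toSMulCon {r : N → N → Prop} (hr : IsRightCongruence r) :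
    SMulCon Sᵐᵒᵖ N where
  toSetoid := ⟨r, hr.1⟩
  smul c x y h := by
    simpa only [mul_smul_comm, mul_one] using hr.2 x y (c • 1) h

variable (S) in
/-- Left multiplication by `a` as an endomorphism of the right `S`-act `N`. -/
def mulLeftHom (a : N) : N →[Sᵐᵒᵖ] N where
  toFun x := a * x
  map_smul' c x := mul_smul_comm c a x

theorem FGRightCongruence.fgSMulCon (hN : FGAct S N) {c : SMulCon Sᵐᵒᵖ N}
    (hc : FGRightCongruence c.r) : FGSMulCon c := by
  obtain ⟨n, z, hz⟩ := hN
  obtain ⟨H, hH, hcong, hHc, hmin⟩ := hc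
  let K : Set (N × N) := ⋃ i, (fun p => (p.1 * z i, p.2 * z i)) '' H
  let d : SMulCon Sᵐᵒᵖ N := smulConGen Sᵐᵒᵖ K
  have hd : IsRightCongruence fun x y => ∀ k, d.r (x * k) (y * k) := by
    refine ⟨⟨fun x k => d.refl' _, fun h k => d.symm' (h k),
      fun h h' k => d.trans' (h k) (h' k)⟩, fun x y l h k => ?_⟩
    simpa only [mul_assoc] using h (l * k)
  have hHd : ∀ p ∈ H, ∀ k, d.r (p.1 * k) (p.2 * k) := by
    intro p hp k
    obtain ⟨⟨i, s⟩, rfl⟩ := hz k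
    have hi : d.r (p.1 * z i) (p.2 * z i) :=
      smulConGen_of_mem (Set.mem_iUnion.2 ⟨i, p, hp, rfl⟩)
    have his := d.smul (.op s) hi
    rwa [← mul_smul_comm, ← mul_smul_comm] at his
  refine .of_finite (H := K) (Set.finite_iUnion fun i => hH.image _) ?_ fun x y hxy => ?_
  · intro _ h
    obtain ⟨i, p, hp, rfl⟩ := Set.mem_iUnion.1 h
    exact hcong.2 _ _ _ (hHc p hp)
  · simpa only [mul_one] using hmin _ hd hHd x y hxy 1

theorem FGSMulCon.fgRightCongruence {c : SMulCon Sᵐᵒᵖ N} (hc : FGSMulCon c)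
    (hr : IsRightCongruence c.r) : FGRightCongruence c.r := by
  obtain ⟨H, hH, hcH⟩ := hc
  exact ⟨H, hH, hr, fun p hp => (hcH _ _).2 (smulConGen_of_mem hp), fun r' hr' hHr' x y hxy =>
    smulConGen_le (c := hr'.toSMulCon S) hHr' ((hcH x y).1 hxy)⟩

theorem IsRightCongruence.comap_mul_left {r : N → N → Prop} (hr : IsRightCongruence r) (a : N) :
    IsRightCongruence fun u v => r (a * u) (a * v) :=
  ⟨hr.1.comap (a * ·), fun u v c h => by simpa only [mul_assoc] using hr.2 _ _ c h⟩

theorem isRightCongruence_smulCon (c : SMulCon Sᵐᵒᵖ S) : IsRightCongruence c.r :=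
  ⟨c.iseqv, fun _ _ s h => c.smul (.op s) h⟩

theorem FGMeet.of_inter_eq_iUnion {c : SMulCon Sᵐᵒᵖ S} {a b : S} {C : Finset S}
    (hC : {x | (∃ s, c.r x (a * s)) ∧ ∃ t, c.r x (b * t)} = ⋃ x ∈ C, {y | ∃ s, c.r y (x * s)}) :
    FGMeet c (orbitHom a : S →[Sᵐᵒᵖ] S) (orbitHom b) := by
  have hC' (x : S) : ((∃ s, c.r x (a * s)) ∧ ∃ t, c.r x (b * t)) ↔ ∃ y ∈ C, ∃ s, c.r x (y * s) := by
    simpa using Set.ext_iff.1 hC x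
  have factor (x : C) : ∃ p : S × S, c.r x (a * p.1) ∧ c.r x (b * p.2) := by
    obtain ⟨⟨s, hs⟩, t, ht⟩ := (hC' x).2 ⟨x, x.2, 1, by rw [mul_one]⟩
    exact ⟨(s, t), hs, ht⟩
  choose p hpa hpb using factor
  refine ⟨Set.range p, Set.finite_range p, ?_, fun u v huv => ?_⟩
  · rintro _ ⟨x, rfl⟩
    exact c.trans' (c.symm' (hpa x)) (hpb x)
  · obtain ⟨x, hx, s, hs⟩ := (hC' (a * u)).1 ⟨⟨u, c.refl' _⟩, v, huv⟩
    refine ⟨p ⟨x, hx⟩, ⟨_, rfl⟩, .op s, ?_⟩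
    rw [map_smul]
    exact c.trans' hs (c.smul (.op s) (hpa ⟨x, hx⟩))

theorem FGMeet.exists_inter_eq_iUnion {c : SMulCon Sᵐᵒᵖ N} (hr : IsRightCongruence c.r) {a b : N}
    (h : FGMeet c (mulLeftHom S a) (mulLeftHom S b)) :
    ∃ C : Finset N, {x | (∃ s, c.r x (a * s)) ∧ ∃ t, c.r x (b * t)} =
      ⋃ x ∈ C, {y | ∃ s, c.r y (x * s)} := by
  obtain ⟨P, hP, hcP, hmP⟩ := h
  refine ⟨(hP.image fun p => a * p.1).toFinset, Set.ext fun x => ?_⟩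
  simp only [Set.mem_ofPred_eq, Set.mem_iUnion, Set.Finite.mem_toFinset, exists_prop]
  constructor
  · rintro ⟨⟨s, hs⟩, t, ht⟩
    obtain ⟨p, hp, m, hm⟩ := hmP s t (c.trans' (c.symm' hs) ht)
    have hm' : c.r (a * s) (a * p.1 * m • 1) := by
      rw [mul_smul_comm, mul_one, ← mul_smul_comm]
      exact hm
    exact ⟨_, ⟨p, hp, rfl⟩, m • 1, c.trans' hs hm'⟩
  · rintro ⟨_, ⟨p, hp, rfl⟩, s, hs⟩
    refine ⟨⟨p.1 * s, by rwa [← mul_assoc]⟩, p.2 * s, ?_⟩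
    rw [← mul_assoc]
    exact c.trans' hs (hr.2 _ _ s (hcP p hp))

theorem RightCoherent.coherentAct (hS : RightCoherent S) : CoherentAct S S := by
  intro c hc n y
  have hcS (a b : S) := hS c.r (hc.fgRightCongruence (isRightCongruence_smulCon c)) a b
  refine .comap_sigmaHom (fun i => ?_) fun i j => ?_
  · exact FGRightCongruence.fgSMulCon (.self S) (hcS (y i) (y i)).2
  · obtain ⟨C, hC⟩ := (hcS (y i) (y j)).1
    exact .of_inter_eq_iUnion hC

theorem CoherentAct.rightCoherent (hN : CoherentAct S N) (hfg : FGAct S N) : RightCoherent N := by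
  intro r hr a b
  have hcong : IsRightCongruence r := hr.choose_spec.2.1
  have hc : FGSMulCon (hcong.toSMulCon S) := FGRightCongruence.fgSMulCon hfg hr
  constructor
  · exact FGMeet.exists_inter_eq_iUnion hcong (.of_fg_comap_sumHom
      (hN.fg_comap (hfg.sum hfg) hc (sumHom (mulLeftHom S a) (mulLeftHom S b))))
  · exact (hN.fg_comap hfg hc (mulLeftHom S a)).fgRightCongruence (hcong.comap_mul_left a)

theorem stmt18_general (hS : RightCoherent S) (hN : FPAct S N) : RightCoherent N :=
  (hN.coherentAct hS.coherentAct).rightCoherent hN.fgAct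

end Monoids

section Products

variable (S T : Type*) [Monoid S] [Monoid T]

/-- The right action of `S` on `S × T` through the first factor. -/
abbrev prodAction : MulAction Sᵐᵒᵖ (S × T) :=
  MulAction.compHom (S × T) (MonoidHom.inl S T).op

attribute [local instance] prodAction

instance prodAction_smulCommClass : SMulCommClass Sᵐᵒᵖ (S × T) (S × T) :=
  ⟨fun _ x y => (mul_assoc x y _)⟩

theorem fpAct_prod [Finite T] : FPAct S (S × T) := by
  refine .of_freeLift_bijective (fun t : T => (1, t)) ?_
  have h (u : Σ _ : T, S) : freeLift S (fun t : T => ((1 : S), t)) u = (u.2, u.1) :=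
    Prod.ext (one_mul u.2) (mul_one u.1)
  constructor
  · rintro ⟨t, s⟩ ⟨t', s'⟩ heq
    rw [h, h] at heq
    cases heq
    rfl
  · rintro ⟨s, t⟩
    exact ⟨⟨t, s⟩, h _⟩

end Products

theorem stmt18 {S T : Type*} [Monoid S] [Monoid T] [Finite T]
    (hS : RightCoherent S) :
    RightCoherent (S × T) := by
  let := prodAction S T
  exact stmt18_general hS (fpAct_prod S T)
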